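/- Every history-deterministic coBüchi automaton that recognises the complement Σ^ω ∖ L_main has at least 61 states. -/

import Mathlib

/-- A (nondeterministic) Büchi/coBüchi automaton: an initial state, a set of
transitions, and a subset of *significant* transitions. -/
structure BuchiAutomaton (σ : Type) (Q : Type) where
  init : Q
  trans : Set (Q × σ × Q)
  sig : Set (Q × σ × Q)
  sig_sub : sig ⊆ trans

namespace BuchiAutomaton

variable {σ Q : Type}

/-- `ρ` is a run of `A` on the infinite word `w`, starting at the state `p`. -/
def IsRunFrom (A : BuchiAutomaton σ Q) (p : Q) (w : ℕ → σ) (ρ : ℕ → Q) : Prop :=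
  ρ 0 = p ∧ ∀ i, (ρ i, w i, ρ (i + 1)) ∈ A.trans

/-- Büchi acceptance: the run contains infinitely many significant transitions. -/
def BuchiAcc (A : BuchiAutomaton σ Q) (w : ℕ → σ) (ρ : ℕ → Q) : Prop :=
  ∀ N, ∃ i, N ≤ i ∧ (ρ i, w i, ρ (i + 1)) ∈ A.sig

/-- coBüchi acceptance: the run contains finitely many significant transitions. -/
def CoBuchiAcc (A : BuchiAutomaton σ Q) (w : ℕ → σ) (ρ : ℕ → Q) : Prop :=
  ∃ N, ∀ i, N ≤ i → (ρ i, w i, ρ (i + 1)) ∉ A.sig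

/-- The language of `A` (as a Büchi automaton), with initial state `p`. -/
def LangFrom (A : BuchiAutomaton σ Q) (p : Q) : Set (ℕ → σ) :=
  {w | ∃ ρ, A.IsRunFrom p w ρ ∧ A.BuchiAcc w ρ}

/-- The language of `A`, read as a Büchi automaton. -/
def Lang (A : BuchiAutomaton σ Q) : Set (ℕ → σ) :=
  A.LangFrom A.init

/-- The language of `A`, read as a coBüchi automaton. -/
def CoLang (A : BuchiAutomaton σ Q) : Set (ℕ → σ) :=
  {w | ∃ ρ, A.IsRunFrom A.init w ρ ∧ A.CoBuchiAcc w ρ}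

/-- `A` is deterministic: at most one outgoing transition per state and letter. -/
def Deterministic (A : BuchiAutomaton σ Q) : Prop :=
  ∀ p a q q', (p, a, q) ∈ A.trans → (p, a, q') ∈ A.trans → q = q'

/-- `FinRun A l p`: `l` is a finite run of `A` from the initial state, ending in
the state `p` (represented as the chronological list of its transitions). -/
inductive FinRun (A : BuchiAutomaton σ Q) : List (Q × σ × Q) → Q → Prop
  | nil : FinRun A [] A.init
  | snoc {l : List (Q × σ × Q)} {p : Q} {a : σ} {q : Q} :
      FinRun A l p → (p, a, q) ∈ A.trans → FinRun A (l ++ [(p, a, q)]) q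

/-- A resolver for `A`: a function from finite runs and letters to transitions,
such that on every finite run from the initial state ending in a state `p` and
every letter `a`, it outputs a transition on `a` with source `p`. -/
structure Resolver (A : BuchiAutomaton σ Q) where
  res : List (Q × σ × Q) → σ → Q × σ × Q
  res_valid : ∀ l p a, A.FinRun l p →
    (res l a).1 = p ∧ (res l a).2.1 = a ∧ res l a ∈ A.trans

/-- The history (finite run) built by a resolver after reading `n` letters of `w`. -/
def Resolver.hist {A : BuchiAutomaton σ Q} (r : Resolver A) (w : ℕ → σ) : ℕ → List (Q × σ × Q)
  | 0 => []
  | n + 1 => r.hist w n ++ [r.res (r.hist w n) (w n)]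

/-- The run induced by the resolver on `w` satisfies the Büchi condition. -/
def Resolver.InducedBuchiAcc {A : BuchiAutomaton σ Q} (r : Resolver A) (w : ℕ → σ) : Prop :=
  ∀ N, ∃ n, N ≤ n ∧ r.res (r.hist w n) (w n) ∈ A.sig

/-- The run induced by the resolver on `w` satisfies the coBüchi condition. -/
def Resolver.InducedCoBuchiAcc {A : BuchiAutomaton σ Q} (r : Resolver A) (w : ℕ → σ) : Prop :=
  ∃ N, ∀ n, N ≤ n → r.res (r.hist w n) (w n) ∉ A.sig

/-- `A` is history-deterministic (as a Büchi automaton). -/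
def HistoryDeterministic (A : BuchiAutomaton σ Q) : Prop :=
  ∃ r : Resolver A, ∀ w ∈ A.Lang, r.InducedBuchiAcc w

/-- `A` is history-deterministic (as a coBüchi automaton). -/
def CoHistoryDeterministic (A : BuchiAutomaton σ Q) : Prop :=
  ∃ r : Resolver A, ∀ w ∈ A.CoLang, r.InducedCoBuchiAcc w

end BuchiAutomaton

/-- The finite factor `w[m..n)` of the infinite word `w`, as a list. -/
def wordSegment {σ : Type} (w : ℕ → σ) (m n : ℕ) : List σ :=
  (List.range (n - m)).map fun i => w (m + i)

/-- `omegaPow X`: the infinite words that can be written as an infinite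
concatenation of finite words, each belonging to `X`. -/
def omegaPow {σ : Type} (X : Set (List σ)) : Set (ℕ → σ) :=
  {w | ∃ φ : ℕ → ℕ, φ 0 = 0 ∧ StrictMono φ ∧ ∀ k, wordSegment w (φ k) (φ (k + 1)) ∈ X}

/-- The alphabet `Σ = {a, b, c, 1, …, 6, r₁, …, r₆, y}` (with `num i` the digit
`i+1` and `res i` the reset letter `r_{i+1}`). -/
inductive Al : Type
  | a | b | c
  | num (i : Fin 6)
  | res (i : Fin 6)
  | y
deriving DecidableEq, Fintype

/-- The states of the classifier DFA. -/
inductive CSt : Type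
  | p | q | t | s | r
  | ell (i : Fin 6)
deriving DecidableEq, Fintype

/-- The (partial) transition function of the classifier. A digit `num i` belongs
to `E = {1,2,3}` iff `i.val < 3`, and to `F = {4,5,6}` otherwise. -/
def clStep : CSt → Al → Option CSt
  | .p, .b => some .p
  | .p, .num _ => some .p
  | .p, .y => some .p
  | .p, .a => some .q
  | .p, .c => some .t
  | .q, .a => some .q
  | .q, .num _ => some .p
  | .q, .y => some .p
  | .q, .b => some .r
  | .q, .c => some .s
  | .t, .c => some .t
  | .t, .b => some .p
  | .t, .a => some .q
  | .t, .num i => if i.val < 3 then some (.ell i) else some .p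
  | .t, .y => some .p
  | .s, .c => some .s
  | .s, .b => some .r
  | .s, .a => some .q
  | .s, .num i => if i.val < 3 then some (.ell i) else some .p
  | .s, .y => some .p
  | .r, .b => some .r
  | .r, .a => some .q
  | .r, .c => some .s
  | .r, .num i => if 3 ≤ i.val then some (.ell i) else some .p
  | .r, .y => some .p
  | _, _ => none

/-- The run of the classifier on a finite word, from a given state. -/
def clRun : CSt → List Al → Option CSt
  | c, [] => some c
  | c, l :: w =>
    match clStep c l with
    | some c' => clRun c' w
    | none => none

/-- The language `L_α` (for `α : Fin 6`, representing `L_{α+1}`): the finite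
words whose run in the classifier from `p` is defined and ends in `ℓ_α`. -/
def Lcl (α : Fin 6) : Set (List Al) :=
  {w | clRun .p w = some (.ell α)}

/-- `L_main = (Σ^* ⋃_{α≠β} (L_α ∪ {r_α}) L_β L_β Σ^* y)^ω`. -/
def LMain : Set (ℕ → Al) :=
  omegaPow {w | ∃ α β : Fin 6, α ≠ β ∧ ∃ u v₁ v₂ v₃ z : List Al,
    (v₁ ∈ Lcl α ∨ v₁ = [Al.res α]) ∧ v₂ ∈ Lcl β ∧ v₃ ∈ Lcl β ∧
    w = u ++ v₁ ++ v₂ ++ v₃ ++ z ++ [Al.y]}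

/-! ### Finite paths and ultimately periodic words -/

/-- `IsPath T q w q'`: some path from `q` to `q'` labelled `w` uses transitions in `T` only. -/
def IsPath {σ Q : Type} (T : Set (Q × σ × Q)) : Q → List σ → Q → Prop
  | q, [], q' => q = q'
  | q, a :: w, q' => ∃ p, (q, a, p) ∈ T ∧ IsPath T p w q'

theorem IsPath.append {σ Q : Type} {T : Set (Q × σ × Q)} {v : List σ} {q₂ q₃ : Q}
    (hv : IsPath T q₂ v q₃) : ∀ {u : List σ} {q₁ : Q}, IsPath T q₁ u q₂ → IsPath T q₁ (u ++ v) q₃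
  | [], _, hu => by
    cases hu
    exact hv
  | _ :: _, _, ⟨p, hp, hu⟩ => ⟨p, hp, IsPath.append hv hu⟩

theorem IsPath.concat {σ Q : Type} {T : Set (Q × σ × Q)} {u : List σ} {a : σ} {q₁ q₂ q₃ : Q}
    (hu : IsPath T q₁ u q₂) (h : (q₂, a, q₃) ∈ T) : IsPath T q₁ (u ++ [a]) q₃ :=
  IsPath.append (show IsPath T q₂ [a] q₃ from ⟨q₃, h, rfl⟩) hu

theorem IsPath.exists_states {σ Q : Type} {T : Set (Q × σ × Q)} {q' : Q} :
    ∀ {w : List σ} {q : Q}, IsPath T q w q' →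
      ∃ ρ : ℕ → Q, ρ 0 = q ∧ ρ w.length = q' ∧
        ∀ (i : ℕ) (h : i < w.length), (ρ i, w[i], ρ (i + 1)) ∈ T
  | [], q, h => ⟨fun _ => q, rfl, h, by simp⟩
  | a :: w, q, ⟨p, hp, h⟩ => by
    obtain ⟨ρ, h0, hl, hs⟩ := IsPath.exists_states h
    refine ⟨fun n => Nat.casesOn n q ρ, rfl, by simpa using hl, ?_⟩
    rintro (_ | i) hi
    · simpa [h0] using hp
    · simpa using hs i (by simpa using hi)

/-- The ultimately periodic word `x v^ω`. -/
def ultPeriodic {σ : Type} (x v : List σ) (hv : v ≠ []) (n : ℕ) : σ :=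
  if h : n < x.length then x[n]
  else v[(n - x.length) % v.length]'(Nat.mod_lt _ (List.length_pos_iff.2 hv))

theorem ultPeriodic_mem_coLang {σ Q : Type} {A : BuchiAutomaton σ Q} {q : Q} {x v : List σ}
    (hv : v ≠ []) (hx : IsPath A.trans A.init x q) (hloop : IsPath (A.trans \ A.sig) q v q) :
    ultPeriodic x v hv ∈ A.CoLang := by
  obtain ⟨ρ, hρ0, hρl, hρ⟩ := hx.exists_states
  obtain ⟨η, hη0, hηl, hη⟩ := hloop.exists_states
  have hpos : 0 < v.length := List.length_pos_iff.2 hv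
  let run : ℕ → Q := fun n => if n < x.length then ρ n else η ((n - x.length) % v.length)
  have hlate : ∀ i, x.length ≤ i →
      (run i, ultPeriodic x v hv i, run (i + 1)) ∈ A.trans \ A.sig := by
    intro i hi
    have hlt := Nat.mod_lt (i - x.length) hpos
    have hstep := hη _ hlt
    have hnext : run (i + 1) = η ((i - x.length) % v.length + 1) := by
      have hsub : i + 1 - x.length = (i - x.length) + 1 := by omega
      have hnot : ¬ i + 1 < x.length := by omega
      simp only [run, hnot, if_false, hsub]
      rcases Nat.lt_or_ge ((i - x.length) % v.length + 1) v.length with h | h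
      · rw [Nat.add_mod, Nat.mod_eq_of_lt (a := 1) (by omega), Nat.mod_eq_of_lt h]
      · have heq : (i - x.length) % v.length + 1 = v.length := by omega
        rw [← Nat.mod_add_mod, heq, Nat.mod_self, hη0, hηl]
    have hnot : ¬ i < x.length := by omega
    rw [hnext]
    simpa [run, ultPeriodic, hnot] using hstep
  refine ⟨run, ⟨?_, fun i => ?_⟩, x.length, fun i hi => (hlate i hi).2⟩
  · by_cases h : 0 < x.length
    · simp [run, h, hρ0]
    · have h0 : x.length = 0 := by omega
      rw [h0, hρ0] at hρl
      simp [run, h, hη0, hρl]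
  · rcases Nat.lt_or_ge i x.length with h | h
    · have hnext : run (i + 1) = ρ (i + 1) := by
        by_cases h' : i + 1 < x.length
        · simp [run, h']
        · have heq : i + 1 = x.length := by omega
          simp [run, heq, hη0, hρl]
      rw [hnext]
      simpa [run, ultPeriodic, h] using hρ i h
    · exact (hlate i h).1

theorem wordSegment_append {σ : Type} (w : ℕ → σ) {l m n : ℕ} (h₁ : l ≤ m) (h₂ : m ≤ n) :
    wordSegment w l m ++ wordSegment w m n = wordSegment w l n := by
  have h : n - l = (m - l) + (n - m) := by omega
  rw [wordSegment, wordSegment, wordSegment, h, List.range_add, List.map_append, List.map_map]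
  congr 2
  funext i
  simp only [Function.comp_apply]
  congr 1
  omega

theorem exists_word_of_chain {σ : Type} (U : ℕ → List σ)
    (hU : ∀ n, ∃ v, v ≠ [] ∧ U (n + 1) = U n ++ v) :
    ∃ w : ℕ → σ, ∀ n, wordSegment w 0 (U n).length = U n := by
  have hpre : ∀ m n, m ≤ n → U m <+: U n := by
    intro m n h
    induction n, h using Nat.le_induction with
    | base => exact List.prefix_rfl
    | succ n _ ih =>
      obtain ⟨v, -, hv⟩ := hU n
      exact ih.trans ⟨v, hv.symm⟩
  have hlen : ∀ n, n ≤ (U n).length := by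
    intro n
    induction n with
    | zero => simp
    | succ n ih =>
      obtain ⟨v, hv, h⟩ := hU n
      have := List.length_pos_iff.2 hv
      rw [h, List.length_append]
      omega
  refine ⟨fun n => (U (n + 1))[n]'(hlen (n + 1)), fun n => ?_⟩
  refine List.ext_getElem (by simp [wordSegment]) fun i h₁ h₂ => ?_
  simp only [wordSegment, List.getElem_map, List.getElem_range, Nat.zero_add]
  rcases le_total (i + 1) n with h | h
  · exact (hpre _ _ h).getElem _
  · exact ((hpre _ _ h).getElem _).symm

/-! ### Configurations of a resolver -/

namespace BuchiAutomaton.Resolver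

variable {σ Q : Type} {A : BuchiAutomaton σ Q}

/-- The finite run built by the resolver on a finite word, together with its last state. -/
def config (r : Resolver A) (x : List σ) : List (Q × σ × Q) × Q :=
  x.foldl (fun c a => (c.1 ++ [r.res c.1 a], (r.res c.1 a).2.2)) ([], A.init)

theorem config_concat (r : Resolver A) (x : List σ) (a : σ) :
    r.config (x ++ [a]) = ((r.config x).1 ++ [r.res (r.config x).1 a],
      (r.res (r.config x).1 a).2.2) := by
  simp [config]

theorem finRun_config (r : Resolver A) (x : List σ) :
    A.FinRun (r.config x).1 (r.config x).2 := by
  induction x using List.reverseRecOn with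
  | nil => exact FinRun.nil
  | append_singleton x a ih =>
    obtain ⟨h₁, h₂, h₃⟩ := r.res_valid _ _ a ih
    rw [config_concat]
    have heq : r.res (r.config x).1 a =
        ((r.config x).2, a, (r.res (r.config x).1 a).2.2) := by
      ext1
      · exact h₁
      · ext1
        · exact h₂
        · rfl
    have h := FinRun.snoc ih (heq ▸ h₃)
    rwa [← heq] at h

theorem res_config (r : Resolver A) (x : List σ) (a : σ) :
    r.res (r.config x).1 a = ((r.config x).2, a, (r.config (x ++ [a])).2) ∧
      r.res (r.config x).1 a ∈ A.trans := by
  obtain ⟨h₁, h₂, h₃⟩ := r.res_valid _ _ a (r.finRun_config x)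
  refine ⟨?_, h₃⟩
  rw [config_concat]
  ext1
  · exact h₁
  · ext1
    · exact h₂
    · rfl

theorem hist_eq_config (r : Resolver A) (w : ℕ → σ) (n : ℕ) :
    r.hist w n = (r.config (wordSegment w 0 n)).1 := by
  induction n with
  | zero => rfl
  | succ n ih =>
    have h : wordSegment w 0 (n + 1) = wordSegment w 0 n ++ [w n] := by
      simp [wordSegment, List.range_succ]
    rw [hist, h, config_concat, ih]

theorem isPath_config (r : Resolver A) (x : List σ) :
    IsPath A.trans A.init x (r.config x).2 := by
  induction x using List.reverseRecOn with
  | nil => rfl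
  | append_singleton x a ih =>
    obtain ⟨h₁, h₂⟩ := r.res_config x a
    exact ih.concat (h₁ ▸ h₂)

/-! ### Recurrent states for a safety automaton -/

variable {S : Type} (step : S → σ → Option S)

/-- After reading `x`, the resolver avoids significant transitions on every finite word
on which the partial deterministic automaton `step` has a run from `d`. -/
def SafeAfter (r : Resolver A) (x : List σ) (d : S) : Prop :=
  ∀ u a, (List.foldlM step d (u ++ [a])).isSome → r.res (r.config (x ++ u)).1 a ∉ A.sig

variable {step}

theorem isSome_foldlM_of_append {d : S} {u v : List σ}
    (h : (List.foldlM step d (u ++ v)).isSome) : (List.foldlM step d u).isSome := by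
  rw [List.foldlM_append] at h
  exact Option.isSome_of_isSome_bind h

theorem foldlM_append_of_eq_some {d d' : S} {u v : List σ}
    (h : List.foldlM step d u = some d') :
    List.foldlM step d (u ++ v) = List.foldlM step d' v := by
  rw [List.foldlM_append, h]
  rfl

theorem SafeAfter.isPath {r : Resolver A} {x : List σ} {d : S} (hx : r.SafeAfter step x d)
    (u : List σ) (hu : (List.foldlM step d u).isSome) :
    IsPath (A.trans \ A.sig) (r.config x).2 u (r.config (x ++ u)).2 := by
  induction u using List.reverseRecOn with
  | nil => simp [IsPath]
  | append_singleton u a ih =>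
    obtain ⟨h₁, h₂⟩ := r.res_config (x ++ u) a
    have h₃ := hx u a hu
    rw [h₁, List.append_assoc] at h₂ h₃
    exact (ih (isSome_foldlM_of_append hu)).concat ⟨h₂, h₃⟩

theorem exists_safeAfter (r : Resolver A) (hr : ∀ w ∈ A.CoLang, r.InducedCoBuchiAcc w)
    (hsafe : ∀ (w : ℕ → σ) (m : ℕ) (d : S),
      (∀ n, m ≤ n → (List.foldlM step d (wordSegment w m n)).isSome) → w ∈ A.CoLang)
    (hback : ∀ (d d' : S) (u : List σ), List.foldlM step d u = some d' →
      ∃ z, List.foldlM step d' z = some d) (d : S) :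
    ∃ x, r.SafeAfter step x d := by
  by_contra! hcon
  have hext : ∀ x, ∃ u a z, List.foldlM step d (u ++ [a] ++ z) = some d ∧
      r.res (r.config (x ++ u)).1 a ∈ A.sig := by
    intro x
    have h := hcon x
    simp only [SafeAfter, not_forall, not_not] at h
    obtain ⟨u, a, hu, hsig⟩ := h
    obtain ⟨d', hd'⟩ := Option.isSome_iff_exists.1 hu
    obtain ⟨z, hz⟩ := hback _ _ _ hd'
    exact ⟨u, a, z, by rw [foldlM_append_of_eq_some hd', hz], hsig⟩
  choose u a z hloop hsig using hext
  let U : ℕ → List σ := fun n => Nat.rec [] (fun _ x => x ++ (u x ++ [a x] ++ z x)) n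
  have hUsucc : ∀ n, U (n + 1) = U n ++ (u (U n) ++ [a (U n)] ++ z (U n)) := fun _ => rfl
  have hUrun : ∀ n, List.foldlM step d (U n) = some d := by
    intro n
    induction n with
    | zero => rfl
    | succ n ih => rw [hUsucc, foldlM_append_of_eq_some ih, hloop]
  have hUlen : ∀ n, n ≤ (U n).length := by
    intro n
    induction n with
    | zero => simp
    | succ n ih =>
      rw [hUsucc]
      simp only [List.length_append, List.length_singleton]
      omega
  obtain ⟨w, hw⟩ := exists_word_of_chain U fun n => ⟨_, by simp, hUsucc n⟩
  obtain ⟨N, hN⟩ := hr w <| hsafe w 0 d fun n _ => by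
    apply isSome_foldlM_of_append (v := wordSegment w n (U n).length)
    rw [wordSegment_append w (Nat.zero_le _) (hUlen n), hw, hUrun]
    rfl
  have hpre : wordSegment w 0 ((U N).length + (u (U N)).length) = U N ++ u (U N) ∧
      w ((U N).length + (u (U N)).length) = a (U N) := by
    have h := hw (N + 1)
    have hlt : (U N).length + (u (U N)).length < (U (N + 1)).length := by
      rw [hUsucc]
      simp only [List.length_append, List.length_singleton]
      omega
    constructor
    · rw [← wordSegment_append w (Nat.zero_le _) hlt.le, hUsucc] at h
      simp only [← List.append_assoc] at h
      rw [List.append_assoc _ [_]] at h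
      exact (List.append_inj h (by simp [wordSegment])).1
    · have hget := List.getElem_of_eq h.symm hlt
      simp only [wordSegment, List.getElem_map, List.getElem_range, Nat.zero_add] at hget
      rw [← hget]
      simp [hUsucc]
  refine hN ((U N).length + (u (U N)).length) (by have := hUlen N; omega) ?_
  rw [hist_eq_config, hpre.1, hpre.2]
  exact hsig _

theorem exists_recurrent_state [Finite Q] (r : Resolver A)
    (hr : ∀ w ∈ A.CoLang, r.InducedCoBuchiAcc w)
    (hsafe : ∀ (w : ℕ → σ) (m : ℕ) (d : S),
      (∀ n, m ≤ n → (List.foldlM step d (wordSegment w m n)).isSome) → w ∈ A.CoLang)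
    (hback : ∀ (d d' : S) (u : List σ), List.foldlM step d u = some d' →
      ∃ z, List.foldlM step d' z = some d) (d : S) :
    ∃ q x, IsPath A.trans A.init x q ∧ ∀ u, (List.foldlM step d u).isSome →
      ∃ z, List.foldlM step d (u ++ z) = some d ∧ IsPath (A.trans \ A.sig) q (u ++ z) q := by
  let T : List σ → Set Q := fun x =>
    {q | ∃ u, List.foldlM step d u = some d ∧ (r.config (x ++ u)).2 = q}
  have hne : {x | r.SafeAfter step x d}.Nonempty := r.exists_safeAfter hr hsafe hback d
  let x := Function.argminOn (fun x => (T x).ncard) {x | r.SafeAfter step x d} hne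
  have hx : r.SafeAfter step x d := Function.argminOn_mem _ _ hne
  have hmin : ∀ y, r.SafeAfter step y d → (T x).ncard ≤ (T y).ncard := fun y hy =>
    Function.argminOn_le (fun x => (T x).ncard) {x | r.SafeAfter step x d} hy
  refine ⟨(r.config x).2, x, r.isPath_config x, fun u hu => ?_⟩
  obtain ⟨d', hd'⟩ := Option.isSome_iff_exists.1 hu
  obtain ⟨z, hz⟩ := hback _ _ _ hd'
  have hloop : List.foldlM step d (u ++ z) = some d := by rw [foldlM_append_of_eq_some hd', hz]
  have hgood : r.SafeAfter step (x ++ (u ++ z)) d := by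
    intro v a hv
    rw [List.append_assoc]
    apply hx
    rwa [List.append_assoc, foldlM_append_of_eq_some hloop]
  have hsub : T (x ++ (u ++ z)) ⊆ T x := by
    rintro _ ⟨v, hv, rfl⟩
    exact ⟨u ++ z ++ v, by rw [foldlM_append_of_eq_some hloop, hv], by simp⟩
  have heq : T (x ++ (u ++ z)) = T x :=
    Set.eq_of_subset_of_ncard_le hsub (hmin _ hgood) (Set.toFinite _)
  obtain ⟨v, hv, hq⟩ : (r.config x).2 ∈ T (x ++ (u ++ z)) := by
    rw [heq]
    exact ⟨[], rfl, by simp⟩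
  have hrun : List.foldlM step d (u ++ (z ++ v)) = some d := by
    rw [← List.append_assoc, foldlM_append_of_eq_some hloop, hv]
  refine ⟨z ++ v, hrun, ?_⟩
  have hpath := hx.isPath (u ++ (z ++ v)) (by rw [hrun]; rfl)
  rw [List.append_assoc, List.append_assoc] at hq
  rwa [hq] at hpath

end BuchiAutomaton.Resolver

/-! ### The safety automaton with 61 states -/

/-- The non-final states of the classifier. -/
inductive BlockState : Type
  | p | q | t | s | r
deriving DecidableEq

instance : Fintype BlockState :=
  ⟨{.p, .q, .t, .s, .r}, fun b => by cases b <;> decide⟩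

/-- The inclusion of the non-final states into the states of the classifier. -/
def BlockState.toCSt : BlockState → CSt
  | .p => .p
  | .q => .q
  | .t => .t
  | .s => .s
  | .r => .r

/-- Separates the final from the non-final states of the classifier. -/
def CSt.split : CSt → Fin 6 ⊕ BlockState
  | .p => .inr .p
  | .q => .inr .q
  | .t => .inr .t
  | .s => .inr .s
  | .r => .inr .r
  | .ell i => .inl i

theorem CSt.eq_ell_of_split {c : CSt} {β : Fin 6} (h : c.split = .inl β) : c = .ell β := by
  cases c <;> simp_all [CSt.split]

theorem CSt.eq_toCSt_of_split {c : CSt} {b : BlockState} (h : c.split = .inr b) :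
    c = b.toCSt := by
  cases c <;> simp_all [CSt.split] <;> subst h <;> rfl

/-- The state `(α, f, b)` records that the last classified block or reset letter has index `α`,
that the classifier is in state `b` on the current block, and, if `f` holds, that the last block
is preceded by one (or by a reset letter) of another index. -/
abbrev TrackState : Type := Fin 6 × Bool × BlockState

/-- The update of the record when a block of index `β` is completed; it is undefined when this
completes an infix in `(L_α ∪ {r_α}) L_β L_β` with `α ≠ β`. -/
def hitStep (α : Fin 6) (f : Bool) (β : Fin 6) : Option TrackState :=
  if β = α then if f then none else some (α, false, .p) else some (β, true, .p)

/-- The update of the record on a letter. -/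
def trackStep (d : TrackState) (l : Al) : Option TrackState :=
  match l with
  | .res β => some (β, false, .p)
  | l =>
    match (clStep d.2.2.toCSt l).map CSt.split with
    | some (.inl β) => hitStep d.1 d.2.1 β
    | some (.inr b) => some (d.1, d.2.1, b)
    | none => none

theorem clStep_res (b : BlockState) (β : Fin 6) : clStep b.toCSt (.res β) = none := by
  cases b <;> rfl

theorem trackStep_eq {d : TrackState} {l : Al} {c : CSt} (hc : clStep d.2.2.toCSt l = some c) :
    trackStep d l = match c.split with
      | .inl β => hitStep d.1 d.2.1 β
      | .inr b' => some (d.1, d.2.1, b') := by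
  cases l with
  | res β => simp [clStep_res] at hc
  | _ => simp only [trackStep, hc, Option.map_some]; cases c.split <;> rfl

/-- The safety automaton: the tracking states, and the state `none` forbidding the letter `y`. -/
def safeStep : Option TrackState → Al → Option (Option TrackState)
  | some d, l => (trackStep d l).map some
  | none, l => if l = .y then none else some none

theorem foldlM_safeStep_some (d : TrackState) (u : List Al) :
    List.foldlM safeStep (some d) u = (List.foldlM trackStep d u).map some := by
  induction u generalizing d with
  | nil => rfl
  | cons l u ih =>
    simp only [List.foldlM_cons, safeStep]
    cases trackStep d l with
    | none => rfl
    | some d' => exact ih d'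

theorem foldlM_safeStep_none {u : List Al} (h : Al.y ∉ u) :
    List.foldlM safeStep none u = some none := by
  induction u with
  | nil => rfl
  | cons l u ih =>
    simp only [List.mem_cons, not_or] at h
    simp only [List.foldlM_cons, safeStep, if_neg (Ne.symm h.1)]
    exact ih h.2

theorem foldlM_safeStep_none_of_mem {u : List Al} (h : Al.y ∈ u) :
    List.foldlM safeStep none u = none := by
  induction u with
  | nil => simp at h
  | cons l u ih =>
    simp only [List.foldlM_cons, safeStep]
    split_ifs with hl
    · rfl
    · exact ih ((List.mem_cons.1 h).resolve_left (Ne.symm hl))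

/-! ### Bad infixes -/

/-- The words in `(L_α ∪ {r_α}) L_β L_β` for some `α ≠ β`. -/
def BadWord (k : List Al) : Prop :=
  ∃ α β : Fin 6, α ≠ β ∧ ∃ v₁ v₂ v₃ : List Al,
    (v₁ ∈ Lcl α ∨ v₁ = [Al.res α]) ∧ v₂ ∈ Lcl β ∧ v₃ ∈ Lcl β ∧ k = v₁ ++ v₂ ++ v₃

theorem clRun_append (c : CSt) (u v : List Al) :
    clRun c (u ++ v) = (clRun c u).bind fun c' => clRun c' v := by
  induction u generalizing c with
  | nil => rfl
  | cons l u ih =>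
    simp only [List.cons_append, clRun]
    cases clStep c l with
    | none => rfl
    | some c' => exact ih c'

/-- A word read by the tracking automaton ends with the blocks described by its state. -/
def Tracks (w : List Al) (d : TrackState) : Prop :=
  (∃ u v g, w = u ++ v ++ g ∧ (v ∈ Lcl d.1 ∨ v = [Al.res d.1]) ∧
    clRun .p g = some d.2.2.toCSt) ∧
  (d.2.1 = true → ∃ α, α ≠ d.1 ∧ ∃ u v₁ v₂ g, w = u ++ v₁ ++ v₂ ++ g ∧
    (v₁ ∈ Lcl α ∨ v₁ = [Al.res α]) ∧ v₂ ∈ Lcl d.1 ∧ clRun .p g = some d.2.2.toCSt)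

theorem Tracks.step {w : List Al} {d : TrackState} (h : Tracks w d) (l : Al) :
    (∃ d', trackStep d l = some d' ∧ Tracks (w ++ [l]) d') ∨
      ∃ u k, w ++ [l] = u ++ k ∧ BadWord k := by
  obtain ⟨α, f, b⟩ := d
  obtain ⟨⟨u, v, g, rfl, hv, hg⟩, harmed⟩ := h
  by_cases hres : ∃ β, l = .res β
  · obtain ⟨β, rfl⟩ := hres
    exact .inl ⟨(β, false, .p), rfl, ⟨u ++ v ++ g, [.res β], [], by simp, .inr rfl, rfl⟩, by simp⟩
  have hdef : ∃ c, clStep b.toCSt l = some c := by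
    cases b <;> cases l <;> simp [BlockState.toCSt, clStep] at hres ⊢ <;>
      split_ifs <;> simp
  obtain ⟨c, hc⟩ := hdef
  have hrun : ∀ g, clRun .p g = some b.toCSt → clRun .p (g ++ [l]) = some c := by
    intro g hg
    rw [clRun_append, hg]
    simp [clRun, hc]
  rw [trackStep_eq (d := (α, f, b)) hc]
  rcases hs : c.split with β | b'
  · have hβ : ∀ g, clRun .p g = some b.toCSt → g ++ [l] ∈ Lcl β := fun g hg => by
      exact (hrun g hg).trans (congrArg some (CSt.eq_ell_of_split hs))
    simp only [hitStep]
    by_cases hβα : β = α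
    · subst hβα
      cases f with
      | false =>
        exact .inl ⟨(β, false, .p), by simp,
          ⟨u ++ v, g ++ [l], [], by simp, .inl (hβ g hg), rfl⟩, by simp⟩
      | true =>
        obtain ⟨α, hα, u', v₁, v₂, g', heq, hv₁, hv₂, hg'⟩ := harmed rfl
        exact .inr ⟨u', v₁ ++ v₂ ++ (g' ++ [l]), by rw [heq]; simp,
          α, β, hα, v₁, v₂, g' ++ [l], hv₁, hv₂, hβ g' hg', rfl⟩
    · refine .inl ⟨(β, true, .p), by simp [hβα], ⟨u ++ v, g ++ [l], [], by simp, .inl (hβ g hg),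
        rfl⟩, fun _ => ⟨α, Ne.symm hβα, u, v, g ++ [l], [], by simp, hv, hβ g hg, rfl⟩⟩
  · have hb := CSt.eq_toCSt_of_split hs
    subst hb
    refine .inl ⟨_, rfl, ⟨u, v, g ++ [l], by simp, hv, hrun g hg⟩, fun hf => ?_⟩
    obtain ⟨α', hα, u', v₁, v₂, g', heq, hv₁, hv₂, hg'⟩ := harmed hf
    exact ⟨α', hα, u', v₁, v₂, g' ++ [l], by rw [heq]; simp, hv₁, hv₂, hrun g' hg'⟩

theorem Tracks.exists_badWord {w x : List Al} {d : TrackState} (h : Tracks w d)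
    (hx : List.foldlM trackStep d x = none) :
    ∃ u k z, w ++ x = u ++ k ++ z ∧ BadWord k := by
  induction x generalizing w d with
  | nil => cases hx
  | cons l x ih =>
    rcases h.step l with ⟨d', hd', hT⟩ | ⟨u, k, heq, hk⟩
    · rw [List.foldlM_cons, hd'] at hx
      obtain ⟨u, k, z, heq, hk⟩ := ih hT hx
      exact ⟨u, k, z, by rw [← heq]; simp, hk⟩
    · exact ⟨u, k, x, by rw [← heq]; simp, hk⟩

theorem tracks_res (α : Fin 6) : Tracks [Al.res α] (α, false, .p) :=
  ⟨⟨[], [.res α], [], by simp, .inr rfl, rfl⟩, by simp⟩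

/-- `b` recognises at least the blocks that `c` recognises. -/
def BlockState.Dominates (b c : BlockState) : Bool :=
  match b, c with
  | _, .p => true
  | .s, .t => true
  | b, c => b = c

theorem BlockState.dominates_step : ∀ b c : BlockState, b.Dominates c → ∀ l,
    (match (clStep c.toCSt l).map CSt.split, (clStep b.toCSt l).map CSt.split with
    | some (.inr c'), some (.inr b') => b'.Dominates c'
    | some (.inr c'), some (.inl _) => decide (c' = .p)
    | some (.inl α), some (.inl β) => decide (α = β)
    | none, _ => true
    | _, _ => false) = true := by
  decide

theorem clRun_ell_of_ne_nil (α : Fin 6) (v : List Al) (hv : v ≠ []) :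
    clRun (.ell α) v = none := by
  cases v with
  | nil => exact absurd rfl hv
  | cons l v => cases l <;> rfl

theorem foldlM_trackStep_of_dominates {α : Fin 6} {v : List Al} {b c : BlockState}
    (hbc : b.Dominates c) (hv : clRun c.toCSt v = some (.ell α)) (γ : Fin 6) (f : Bool) :
    List.foldlM trackStep (γ, f, b) v = none ∨
      ∃ f', List.foldlM trackStep (γ, f, b) v = some (α, f', .p) := by
  induction v generalizing b c γ f with
  | nil => cases c <;> cases hv
  | cons l v ih =>
    have hdom := BlockState.dominates_step b c hbc l
    rw [clRun] at hv
    rcases hc : clStep c.toCSt l with _ | c'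
    · rw [hc] at hv
      cases hv
    rw [hc] at hv hdom
    rcases hb : clStep b.toCSt l with _ | b'
    · rw [hb] at hdom
      revert hdom
      cases c'.split <;> simp
    rw [hb] at hdom
    rw [List.foldlM_cons, trackStep_eq (d := (γ, f, b)) hb]
    rcases hcs : c'.split with α' | c'' <;> rcases hbs : b'.split with β | b'' <;>
      simp [hcs, hbs] at hdom
    · subst hdom
      rw [CSt.eq_ell_of_split hcs] at hv
      have hnil : v = [] := by
        by_contra hne
        simp [clRun_ell_of_ne_nil _ _ hne] at hv
      subst hnil
      have hα : α' = α := by simpa [clRun] using hv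
      subst hα
      simp only [hitStep]
      split_ifs with h₁ h₂
      · exact .inl rfl
      · exact .inr ⟨false, by rw [h₁]; rfl⟩
      · exact .inr ⟨true, rfl⟩
    · subst hdom
      rw [CSt.eq_toCSt_of_split hcs] at hv
      simp only [hitStep]
      split_ifs with h₁ h₂
      · exact .inl rfl
      · exact ih (b := .p) rfl hv _ _
      · exact ih (b := .p) rfl hv _ _
    · rw [CSt.eq_toCSt_of_split hcs] at hv
      exact ih hdom hv _ _

theorem foldlM_trackStep_of_mem_Lcl {β : Fin 6} {v : List Al} (hv : v ∈ Lcl β) (γ : Fin 6)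
    (f : Bool) : List.foldlM trackStep (γ, f, .p) v = hitStep γ f β := by
  suffices h : ∀ b : BlockState, clRun b.toCSt v = some (.ell β) →
      List.foldlM trackStep (γ, f, b) v = hitStep γ f β from h .p hv
  clear hv
  induction v with
  | nil =>
    intro b hb
    cases b <;> cases hb
  | cons l v ih =>
    intro b hb
    rw [clRun] at hb
    rcases hc : clStep b.toCSt l with _ | c
    · rw [hc] at hb
      cases hb
    rw [hc] at hb
    rw [List.foldlM_cons, trackStep_eq (d := (γ, f, b)) hc]
    rcases hs : c.split with α | b'
    · rw [CSt.eq_ell_of_split hs] at hb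
      have hnil : v = [] := by
        by_contra hne
        simp [clRun_ell_of_ne_nil _ _ hne] at hb
      subst hnil
      have hα : α = β := by simpa [clRun] using hb
      subst hα
      cases h : hitStep γ f α <;> simp [h]
    · rw [CSt.eq_toCSt_of_split hs] at hb
      exact ih b' hb

theorem BadWord.foldlM_trackStep {k : List Al} (hk : BadWord k) (d : TrackState) :
    List.foldlM trackStep d k = none := by
  obtain ⟨α, β, hαβ, v₁, v₂, v₃, hv₁, hv₂, hv₃, rfl⟩ := hk
  obtain ⟨γ, f, b⟩ := d
  have h₁ : List.foldlM trackStep (γ, f, b) v₁ = none ∨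
      ∃ f', List.foldlM trackStep (γ, f, b) v₁ = some (α, f', .p) := by
    rcases hv₁ with hv₁ | rfl
    · exact foldlM_trackStep_of_dominates (c := .p) (by cases b <;> rfl) hv₁ γ f
    · exact .inr ⟨false, rfl⟩
  rw [List.foldlM_append, List.foldlM_append]
  rcases h₁ with h | ⟨f', h⟩
  · rw [h]
    rfl
  · rw [h]
    simp [foldlM_trackStep_of_mem_Lcl hv₂, hitStep, Ne.symm hαβ, foldlM_trackStep_of_mem_Lcl hv₃]

/-! ### Membership in `LMain` -/

theorem mem_compl_LMain_of_safe (w : ℕ → Al) (m : ℕ) (d : Option TrackState)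
    (h : ∀ n, m ≤ n → (List.foldlM safeStep d (wordSegment w m n)).isSome) : w ∈ LMainᶜ := by
  rintro ⟨φ, -, hmono, hφ⟩
  obtain ⟨α, β, hαβ, u, v₁, v₂, v₃, z, hv₁, hv₂, hv₃, heq⟩ := hφ m
  have hle : m ≤ φ m := hmono.le_apply
  have hlt : φ m < φ (m + 1) := hmono (Nat.lt_succ_self m)
  have hs := h (φ (m + 1)) (hle.trans hlt.le)
  rw [← wordSegment_append w hle hlt.le, heq] at hs
  cases d with
  | none =>
    rw [foldlM_safeStep_none_of_mem (by simp)] at hs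
    cases hs
  | some d =>
    have hk : BadWord (v₁ ++ v₂ ++ v₃) := ⟨α, β, hαβ, v₁, v₂, v₃, hv₁, hv₂, hv₃, rfl⟩
    rw [show wordSegment w m (φ m) ++ (u ++ v₁ ++ v₂ ++ v₃ ++ z ++ [Al.y]) =
      (wordSegment w m (φ m) ++ u) ++ ((v₁ ++ v₂ ++ v₃) ++ (z ++ [Al.y])) by simp,
      foldlM_safeStep_some, List.foldlM_append] at hs
    cases hd : List.foldlM trackStep d (wordSegment w m (φ m) ++ u) with
    | none => simp [hd] at hs
    | some d' =>
      rw [hd] at hs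
      simp only [Option.bind_eq_bind, Option.bind_some] at hs
      rw [List.foldlM_append, hk.foldlM_trackStep] at hs
      cases hs

theorem ultPeriodic_mem_LMain {x u k z : List Al} (hk : BadWord k) :
    ultPeriodic x (Al.y :: (u ++ k ++ z)) (by simp) ∈ LMain := by
  obtain ⟨α, β, hαβ, v₁, v₂, v₃, hv₁, hv₂, hv₃, rfl⟩ := hk
  set v := u ++ (v₁ ++ v₂ ++ v₃) ++ z with hvdef
  have hget : ∀ k i, (h : i < v.length + 1) → ultPeriodic x (Al.y :: v) (by simp)
      (x.length + k * (v.length + 1) + i) = (Al.y :: v)[i] := by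
    intro k i h
    have hnot : ¬ x.length + k * (v.length + 1) + i < x.length := by omega
    have hsub : x.length + k * (v.length + 1) + i - x.length = i + k * (v.length + 1) := by omega
    simp only [ultPeriodic, hnot, dif_neg, not_false_eq_true, hsub, List.length_cons,
      Nat.add_mul_mod_self_right, Nat.mod_eq_of_lt h]
  have hseg : ∀ k, wordSegment (ultPeriodic x (Al.y :: v) (by simp))
      (x.length + k * (v.length + 1) + 1) (x.length + (k + 1) * (v.length + 1) + 1) =
      v ++ [Al.y] := by
    intro k
    have hlen : x.length + (k + 1) * (v.length + 1) + 1 - (x.length + k * (v.length + 1) + 1) =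
        v.length + 1 := by
      rw [Nat.succ_mul]
      omega
    refine List.ext_getElem (by simp [wordSegment, hlen]) fun i h₁ h₂ => ?_
    simp only [wordSegment, List.getElem_map, List.getElem_range]
    simp only [List.length_append, List.length_singleton] at h₂
    rcases Nat.lt_or_ge i v.length with h | h
    · rw [show x.length + k * (v.length + 1) + 1 + i = x.length + k * (v.length + 1) + (i + 1) by
        omega, hget k (i + 1) (by omega)]
      simp [h]
    · have hi : i = v.length := by omega
      subst hi
      rw [show x.length + k * (v.length + 1) + 1 + v.length =
        x.length + (k + 1) * (v.length + 1) + 0 by rw [Nat.succ_mul]; omega,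
        hget (k + 1) 0 (by omega)]
      simp
  refine ⟨fun n => if n = 0 then 0 else x.length + n * (v.length + 1) + 1, rfl,
    strictMono_nat_of_lt_succ fun n => ?_, fun n => ?_⟩
  · rcases n with _ | n
    · simp
    · simp only [Nat.succ_ne_zero, if_false]
      rw [Nat.succ_mul (n + 1)]
      omega
  · rcases n with _ | n
    · simp only [if_true, Nat.zero_add, Nat.one_ne_zero, if_false]
      refine ⟨α, β, hαβ, wordSegment (ultPeriodic x (Al.y :: v) (by simp)) 0
        (x.length + 0 * (v.length + 1) + 1) ++ u, v₁, v₂, v₃, z, hv₁, hv₂, hv₃, ?_⟩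
      rw [← wordSegment_append _ (Nat.zero_le (x.length + 0 * (v.length + 1) + 1))
        (by omega), hseg 0, hvdef]
      simp
    · simp only [Nat.succ_ne_zero, if_false]
      refine ⟨α, β, hαβ, u, v₁, v₂, v₃, z, hv₁, hv₂, hv₃, ?_⟩
      rw [hseg (n + 1), hvdef]
      simp

/-! ### Synchronising and separating words -/

/-- A word in which exactly one block, of index `α`, is completed from every state. -/
def hitWord (α : Fin 6) : List Al :=
  if α.val < 3 then [.y, .c, .num α] else [.y, .a, .b, .num α]

theorem foldlM_hitWord (α γ : Fin 6) (f : Bool) (b : BlockState) :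
    List.foldlM trackStep (γ, f, b) (hitWord α) = hitStep γ f α := by
  revert α γ f b
  decide

/-- A word leading the classifier from `p` to `b`. -/
def blockWord : BlockState → List Al
  | .p => []
  | .q => [.a]
  | .t => [.c]
  | .s => [.a, .c]
  | .r => [.a, .b]

/-- A reset letter followed by `syncTail d` leads from every state to `d`. -/
def syncTail (d : TrackState) : List Al :=
  (if d.2.1 then hitWord d.1 else []) ++ blockWord d.2.2

/-- The index of the reset letter to be read before `syncTail d`. -/
def syncIndex (d : TrackState) : Fin 6 :=
  if d.2.1 then d.1 + 1 else d.1

theorem foldlM_syncTail (d : TrackState) :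
    List.foldlM trackStep (syncIndex d, false, .p) (syncTail d) = some d := by
  revert d
  decide

theorem trackStep_y (d : TrackState) : trackStep d .y = some (d.1, d.2.1, .p) := by
  obtain ⟨α, f, b⟩ := d
  cases b <;> rfl

/-- A word leading from every tracking state to `d`. -/
def syncWord (d : TrackState) : List Al :=
  .y :: .res (syncIndex d) :: syncTail d

theorem foldlM_syncWord (d d' : TrackState) :
    List.foldlM trackStep d' (syncWord d) = some d := by
  rw [syncWord, List.foldlM_cons, trackStep_y]
  exact foldlM_syncTail d

theorem exists_foldlM_safeStep_eq (d d' : Option TrackState) (u : List Al)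
    (h : List.foldlM safeStep d u = some d') : ∃ z, List.foldlM safeStep d' z = some d := by
  cases d with
  | none =>
    by_cases hy : Al.y ∈ u
    · simp [foldlM_safeStep_none_of_mem hy] at h
    · rw [foldlM_safeStep_none hy] at h
      cases h
      exact ⟨[], rfl⟩
  | some d =>
    rw [foldlM_safeStep_some] at h
    obtain ⟨e, -, rfl⟩ := Option.map_eq_some_iff.1 h
    exact ⟨syncWord d, by rw [foldlM_safeStep_some, foldlM_syncWord]; rfl⟩

theorem exists_separating_of_block_ne (α : Fin 6) (f : Bool) {b c : BlockState} (h : b ≠ c) :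
    ∃ v, (List.foldlM trackStep (α, f, b) v = none ∧
        (List.foldlM trackStep (α, f, c) v).isSome) ∨
      (List.foldlM trackStep (α, f, c) v = none ∧
        (List.foldlM trackStep (α, f, b) v).isSome) := by
  let β : Fin 6 := if α = 0 then 1 else 0
  let γ : Fin 6 := if α = 3 then 4 else 3
  suffices hs : ∃ v ∈ [[Al.num β] ++ hitWord β, [Al.num γ] ++ hitWord γ,
      [Al.b, Al.num γ] ++ hitWord γ], (List.foldlM trackStep (α, f, b) v = none ∧
        (List.foldlM trackStep (α, f, c) v).isSome) ∨
      (List.foldlM trackStep (α, f, c) v = none ∧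
        (List.foldlM trackStep (α, f, b) v).isSome) from
    let ⟨v, _, hv⟩ := hs
    ⟨v, hv⟩
  revert α f b c
  decide

theorem exists_separating {d e : TrackState} (h : d ≠ e) :
    ∃ v, (List.foldlM trackStep d v = none ∧ (List.foldlM trackStep e v).isSome) ∨
      (List.foldlM trackStep e v = none ∧ (List.foldlM trackStep d v).isSome) := by
  obtain ⟨α, f, b⟩ := d
  obtain ⟨β, g, c⟩ := e
  by_cases hαβ : α = β
  · subst hαβ
    by_cases hfg : f = g
    · subst hfg
      exact exists_separating_of_block_ne α f fun hbc => h (by rw [hbc])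
    · refine ⟨hitWord α, ?_⟩
      simp only [foldlM_hitWord, hitStep]
      cases f <;> cases g <;> simp at hfg ⊢
  · cases f with
    | true =>
      refine ⟨hitWord α, .inl ?_⟩
      simp [foldlM_hitWord, hitStep, hαβ]
    | false =>
      refine ⟨hitWord α ++ hitWord α, .inr ?_⟩
      simp [List.foldlM_append, foldlM_hitWord, hitStep, hαβ]

theorem exists_unsafe_word {d e : Option TrackState} (h : d ≠ e) :
    ∃ (d' : TrackState) (e' : Option TrackState) (v : List Al),
      (some d' = d ∧ e' = e ∨ some d' = e ∧ e' = d) ∧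
      List.foldlM trackStep d' v = none ∧ (List.foldlM safeStep e' v).isSome := by
  have hnone : ∀ d : TrackState, ∃ v, List.foldlM trackStep d v = none ∧
      (List.foldlM safeStep none v).isSome := by
    intro d
    refine ⟨[.res 0, .c, .num 1, .c, .num 1], ?_, rfl⟩
    rfl
  have hsome : ∀ d v, (List.foldlM trackStep d v).isSome →
      (List.foldlM safeStep (some d) v).isSome := by
    intro d v hv
    rwa [foldlM_safeStep_some, Option.isSome_map]
  rcases d with _ | d <;> rcases e with _ | e
  · exact absurd rfl h
  · obtain ⟨v, hv⟩ := hnone e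
    exact ⟨e, none, v, .inr ⟨rfl, rfl⟩, hv⟩
  · obtain ⟨v, hv⟩ := hnone d
    exact ⟨d, none, v, .inl ⟨rfl, rfl⟩, hv⟩
  · obtain ⟨v, ⟨h₁, h₂⟩ | ⟨h₁, h₂⟩⟩ := exists_separating (d := d) (e := e) (by simpa using h)
    · exact ⟨d, some e, v, .inl ⟨rfl, rfl⟩, h₁, hsome _ _ h₂⟩
    · exact ⟨e, some d, v, .inr ⟨rfl, rfl⟩, h₁, hsome _ _ h₂⟩

/-- Every history-deterministic coBüchi automaton recognising
the complement of `L_main` has at least 61 states. -/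
theorem hd_cobuchi_for_compl_LMain_ge_61 {Q : Type} [Fintype Q] (A : BuchiAutomaton Al Q)
    (hhd : A.CoHistoryDeterministic) (hlang : A.CoLang = LMainᶜ) :
    61 ≤ Fintype.card Q := by
  obtain ⟨r, hr⟩ := hhd
  have hrec := r.exists_recurrent_state hr
    (fun w m d h => hlang ▸ mem_compl_LMain_of_safe w m d h) exists_foldlM_safeStep_eq
  choose state x hreach hloop using hrec
  have hinj : Function.Injective state := by
    intro d e hde
    by_contra hne
    obtain ⟨d', e', v, hcases, hbad, hsafe⟩ := exists_unsafe_word hne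
    have hstate : state e' = state (some d') := by
      rcases hcases with ⟨rfl, rfl⟩ | ⟨rfl, rfl⟩
      · exact hde.symm
      · exact hde
    obtain ⟨z₁, -, hpath₁⟩ := hloop e' v hsafe
    obtain ⟨z₂, hz₂, hpath₂⟩ := hloop (some d') (syncWord d')
      (by rw [foldlM_safeStep_some, foldlM_syncWord]; rfl)
    rw [hstate] at hpath₁
    rw [foldlM_safeStep_some, List.foldlM_append, foldlM_syncWord] at hz₂
    obtain ⟨u, k, z, heq, hk⟩ := (tracks_res (syncIndex d')).exists_badWord
      (x := syncTail d' ++ z₂ ++ v) (by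
        have hz₂' : List.foldlM trackStep d' z₂ = some d' := by simpa using hz₂
        rw [List.append_assoc, List.foldlM_append, foldlM_syncTail, Option.bind_eq_bind,
          Option.bind_some, List.foldlM_append, hz₂']
        exact hbad)
    have hword : syncWord d' ++ z₂ ++ (v ++ z₁) = Al.y :: (u ++ k ++ (z ++ z₁)) := by
      rw [← List.append_assoc (u ++ k), ← heq]
      simp [syncWord]
    have hpath := hpath₁.append hpath₂
    rw [hword] at hpath
    have hmem := ultPeriodic_mem_coLang (by simp) (hreach (some d')) hpath
    rw [hlang] at hmem
    exact hmem (ultPeriodic_mem_LMain hk)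
  calc 61 = Fintype.card (Option TrackState) := by decide
    _ ≤ Fintype.card Q := Fintype.card_le_of_injective state hinj
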